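/- Let H be a quasi-bialgebra and A a left H-module algebra. Then the map j : H → A#H, j(h) = 1_A#h, is a morphism of right H-comodule algebras, where A#H carries the right H-comodule algebra structure ρ(a#h) = (x¹·a # x²h₁)⊗x³h₂ and Φ_ρ = (1#X¹)⊗X²⊗X³, and H is a right H-comodule algebra over itself via ρ = Δ and Φ_ρ = Φ. -/

import Mathlib

open TensorProduct BigOperators

/-- A quasi-bialgebra in the sense of Drinfeld. -/
structure QuasiBialgebra (k H : Type*) [Field k] [Ring H] [Algebra k H] where
  comul : H →ₐ[k] H ⊗[k] H
  counit : H →ₐ[k] k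
  Phi : H ⊗[k] (H ⊗[k] H)
  PhiInv : H ⊗[k] (H ⊗[k] H)
  Phi_mul_inv : Phi * PhiInv = 1
  inv_mul_Phi : PhiInv * Phi = 1
  comul_coassoc : ∀ h : H,
    (Algebra.TensorProduct.map (AlgHom.id k H) comul) (comul h)
      = Phi * (Algebra.TensorProduct.assoc k k k H H H)
          ((Algebra.TensorProduct.map comul (AlgHom.id k H)) (comul h)) * PhiInv
  counit_comul_right : ∀ h : H,
    (Algebra.TensorProduct.map (AlgHom.id k H) counit) (comul h) = h ⊗ₜ[k] (1 : k)
  counit_comul_left : ∀ h : H,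
    (Algebra.TensorProduct.map counit (AlgHom.id k H)) (comul h) = (1 : k) ⊗ₜ[k] h
  pentagon :
    ((1 : H) ⊗ₜ[k] Phi)
      * (Algebra.TensorProduct.map (AlgHom.id k H)
          (((Algebra.TensorProduct.assoc k k k H H H).toAlgHom).comp
            (Algebra.TensorProduct.map comul (AlgHom.id k H)))) Phi
      * (Algebra.TensorProduct.map (AlgHom.id k H)
          (Algebra.TensorProduct.map (AlgHom.id k H)
            (Algebra.TensorProduct.includeLeft : H →ₐ[k] H ⊗[k] H))) Phi
    = (Algebra.TensorProduct.map (AlgHom.id k H)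
          (Algebra.TensorProduct.map (AlgHom.id k H) comul)) Phi
      * (Algebra.TensorProduct.assoc k k k H H (H ⊗[k] H))
          ((Algebra.TensorProduct.map comul (AlgHom.id k (H ⊗[k] H))) Phi)
  counit_Phi : (Algebra.TensorProduct.map (AlgHom.id k H)
      (Algebra.TensorProduct.map counit (AlgHom.id k H))) Phi = 1

/-- A quasi-Hopf algebra: a quasi-bialgebra with antipode `S` (a bijective algebra
anti-automorphism with inverse `Sinv`) and elements `alpha`, `beta`, normalized so that
`counit alpha = counit beta = 1`.  Identities involving Sweedler components are stated
universally over all finite representations of the relevant tensors. -/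
structure QuasiHopfAlgebra (k H : Type*) [Field k] [Ring H] [Algebra k H] extends
    QuasiBialgebra k H where
  alpha : H
  beta : H
  S : H →ₗ[k] H
  Sinv : H →ₗ[k] H
  S_one : S 1 = 1
  S_mul : ∀ a b : H, S (a * b) = S b * S a
  Sinv_S : ∀ h : H, Sinv (S h) = h
  S_Sinv : ∀ h : H, S (Sinv h) = h
  antipode_left : ∀ h : H, ∀ (n : ℕ) (d1 d2 : Fin n → H),
    comul h = ∑ i, d1 i ⊗ₜ[k] d2 i →
    ∑ i, S (d1 i) * alpha * d2 i = counit h • alpha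
  antipode_right : ∀ h : H, ∀ (n : ℕ) (d1 d2 : Fin n → H),
    comul h = ∑ i, d1 i ⊗ₜ[k] d2 i →
    ∑ i, d1 i * beta * S (d2 i) = counit h • beta
  antipode_Phi : ∀ (n : ℕ) (X1 X2 X3 : Fin n → H),
    Phi = ∑ i, X1 i ⊗ₜ[k] (X2 i ⊗ₜ[k] X3 i) →
    ∑ i, X1 i * beta * S (X2 i) * alpha * X3 i = 1
  antipode_PhiInv : ∀ (n : ℕ) (x1 x2 x3 : Fin n → H),
    PhiInv = ∑ i, x1 i ⊗ₜ[k] (x2 i ⊗ₜ[k] x3 i) →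
    ∑ i, S (x1 i) * alpha * x2 i * beta * S (x3 i) = 1
  counit_alpha : counit alpha = 1
  counit_beta : counit beta = 1

/-- A left `H`-module algebra over a quasi-bialgebra `Q` (the Sweedler-type identities are
stated universally over finite representations of the relevant tensors). -/
structure LeftModuleAlgebra {k H : Type*} [Field k] [Ring H] [Algebra k H]
    (Q : QuasiBialgebra k H) (A : Type*) [AddCommGroup A] [Module k A] where
  act : H →ₗ[k] A →ₗ[k] A
  act_one : ∀ a : A, act 1 a = a
  act_mul : ∀ (g h : H) (a : A), act (g * h) a = act g (act h a)
  mul : A →ₗ[k] A →ₗ[k] A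
  one : A
  one_mul : ∀ a : A, mul one a = a
  mul_one : ∀ a : A, mul a one = a
  act_unit : ∀ h : H, act h one = Q.counit h • one
  mul_assoc : ∀ (a b c : A) (n : ℕ) (X1 X2 X3 : Fin n → H),
    Q.Phi = ∑ i, X1 i ⊗ₜ[k] (X2 i ⊗ₜ[k] X3 i) →
    mul (mul a b) c = ∑ i, mul (act (X1 i) a) (mul (act (X2 i) b) (act (X3 i) c))
  act_distrib : ∀ (h : H) (a b : A) (m : ℕ) (d1 d2 : Fin m → H),
    Q.comul h = ∑ j, d1 j ⊗ₜ[k] d2 j →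
    act h (mul a b) = ∑ j, mul (act (d1 j) a) (act (d2 j) b)

/-- `mulB` is the multiplication of the smash product `A # H`:
`(a # h)(a' # h') = (x¹·a)(x²h₁·a') # x³h₂h'`. -/
def IsSmashMul {k H A : Type*} [Field k] [Ring H] [Algebra k H]
    [AddCommGroup A] [Module k A] (Q : QuasiBialgebra k H) (M : LeftModuleAlgebra Q A)
    (mulB : (A ⊗[k] H) →ₗ[k] (A ⊗[k] H) →ₗ[k] (A ⊗[k] H)) : Prop :=
  ∀ (a a' : A) (h h' : H) (n : ℕ) (x1 x2 x3 : Fin n → H),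
    Q.PhiInv = ∑ i, x1 i ⊗ₜ[k] (x2 i ⊗ₜ[k] x3 i) →
    ∀ (m : ℕ) (d1 d2 : Fin m → H), Q.comul h = ∑ j, d1 j ⊗ₜ[k] d2 j →
    mulB (a ⊗ₜ[k] h) (a' ⊗ₜ[k] h')
      = ∑ i, ∑ j, (M.mul (M.act (x1 i) a) (M.act (x2 i * d1 j) a')) ⊗ₜ[k] (x3 i * d2 j * h')

/-- `coactB` is the right `H`-coaction of the smash product `A # H`:
`ρ(a # h) = (x¹·a # x²h₁) ⊗ x³h₂`. -/
def IsSmashCoact {k H A : Type*} [Field k] [Ring H] [Algebra k H]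
    [AddCommGroup A] [Module k A] (Q : QuasiBialgebra k H) (M : LeftModuleAlgebra Q A)
    (coactB : (A ⊗[k] H) →ₗ[k] (A ⊗[k] H) ⊗[k] H) : Prop :=
  ∀ (a : A) (h : H) (n : ℕ) (x1 x2 x3 : Fin n → H),
    Q.PhiInv = ∑ i, x1 i ⊗ₜ[k] (x2 i ⊗ₜ[k] x3 i) →
    ∀ (m : ℕ) (d1 d2 : Fin m → H), Q.comul h = ∑ j, d1 j ⊗ₜ[k] d2 j →
    coactB (a ⊗ₜ[k] h) = ∑ i, ∑ j, ((M.act (x1 i) a) ⊗ₜ[k] (x2 i * d1 j)) ⊗ₜ[k] (x3 i * d2 j)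

/-! Applying `ε` to the second slot of the pentagon turns it into `(1 ⊗ (ε ⊗ id ⊗ id)(Φ)) Φ = Φ`,
so that `ε` in the first slot of `Φ`, and hence of `Φ⁻¹`, gives `1` as well. Both structure maps of
`A # H` evaluate a multilinear expression on `Φ⁻¹ (1 ⊗ Δ(h)) = x¹ ⊗ x²h₁ ⊗ x³h₂`. Since `H` acts on
`1_A` through `ε`, putting `1_A` into such an expression applies `ε` to a slot of this tensor, and
the factor coming from `Φ⁻¹` disappears. -/

theorem exists_sum_tmul_tmul_eq {R M N P : Type*} [CommSemiring R] [AddCommMonoid M]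
    [AddCommMonoid N] [AddCommMonoid P] [Module R M] [Module R N] [Module R P]
    (t : M ⊗[R] (N ⊗[R] P)) :
    ∃ (n : ℕ) (x : Fin n → M) (y : Fin n → N) (z : Fin n → P),
      t = ∑ i, x i ⊗ₜ[R] (y i ⊗ₜ[R] z i) := by
  induction t with
  | zero => exact ⟨0, Fin.elim0, Fin.elim0, Fin.elim0, by simp⟩
  | add s t hs ht =>
    obtain ⟨m, x, y, z, rfl⟩ := hs
    obtain ⟨n, x', y', z', rfl⟩ := ht
    exact ⟨m + n, Fin.append x x', Fin.append y y', Fin.append z z', by simp [Fin.sum_univ_add]⟩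
  | tmul x u =>
    obtain ⟨n, y, z, rfl⟩ := TensorProduct.exists_sum_tmul_eq u
    exact ⟨n, fun _ => x, y, z, tmul_sum ..⟩

namespace QuasiBialgebra

variable {k H : Type*} [Field k] [Ring H] [Algebra k H] (Q : QuasiBialgebra k H)
  (V W : Type*) [Ring V] [Algebra k V] [Ring W] [Algebra k W]

/-- The map `ε ⊗ id : H ⊗ V → V`, with `k ⊗ V` identified with `V`. -/
noncomputable def counitLeft : H ⊗[k] V →ₐ[k] V :=
  (Algebra.TensorProduct.lid k V).toAlgHom.comp
    (Algebra.TensorProduct.map Q.counit (AlgHom.id k V))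

/-- The map `id ⊗ ε ⊗ id : H ⊗ H ⊗ V → H ⊗ V`, with `k ⊗ V` identified with `V`. -/
noncomputable def counitMiddle : H ⊗[k] (H ⊗[k] V) →ₐ[k] H ⊗[k] V :=
  Algebra.TensorProduct.map (AlgHom.id k H) (Q.counitLeft V)

variable {V W}

@[simp]
theorem counitLeft_tmul (h : H) (v : V) : Q.counitLeft V (h ⊗ₜ[k] v) = Q.counit h • v := by
  simp [counitLeft]

@[simp]
theorem counitMiddle_tmul (h : H) (t : H ⊗[k] V) :
    Q.counitMiddle V (h ⊗ₜ[k] t) = h ⊗ₜ[k] Q.counitLeft V t := by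
  simp [counitMiddle]

theorem counitLeft_comul (h : H) : Q.counitLeft H (Q.comul h) = h := by
  simp [counitLeft, Q.counit_comul_left]

theorem counitLeft_comp_map (f : V →ₐ[k] W) :
    (Q.counitLeft W).comp (Algebra.TensorProduct.map (AlgHom.id k H) f)
      = f.comp (Q.counitLeft V) := by
  ext <;> simp

theorem counitMiddle_map_map (f : V →ₐ[k] W) (t : H ⊗[k] (H ⊗[k] V)) :
    Q.counitMiddle W (Algebra.TensorProduct.map (AlgHom.id k H)
        (Algebra.TensorProduct.map (AlgHom.id k H) f) t)
      = Algebra.TensorProduct.map (AlgHom.id k H) f (Q.counitMiddle V t) := by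
  simp only [counitMiddle, ← AlgHom.comp_apply, ← Algebra.TensorProduct.map_id_comp,
    counitLeft_comp_map]

theorem counitLeft_comp_assoc :
    (Q.counitLeft (W ⊗[k] V)).comp (Algebra.TensorProduct.assoc k k k H W V).toAlgHom
      = Algebra.TensorProduct.map (Q.counitLeft W) (AlgHom.id k V) := by
  ext <;> simp [Algebra.TensorProduct.one_def, smul_tmul']

theorem counitLeft_comp_assoc_comp_map_comul :
    (Q.counitLeft (H ⊗[k] V)).comp ((Algebra.TensorProduct.assoc k k k H H V).toAlgHom.comp
        (Algebra.TensorProduct.map Q.comul (AlgHom.id k V)))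
      = AlgHom.id k (H ⊗[k] V) := by
  rw [← AlgHom.comp_assoc, counitLeft_comp_assoc]
  ext <;> simp [counitLeft_comul]

theorem counitMiddle_map_assoc_comp_map_comul (t : H ⊗[k] (H ⊗[k] V)) :
    Q.counitMiddle (H ⊗[k] V) (Algebra.TensorProduct.map (AlgHom.id k H)
        ((Algebra.TensorProduct.assoc k k k H H V).toAlgHom.comp
          (Algebra.TensorProduct.map Q.comul (AlgHom.id k V))) t) = t := by
  rw [counitMiddle, ← AlgHom.comp_apply, ← Algebra.TensorProduct.map_id_comp,
    counitLeft_comp_assoc_comp_map_comul, Algebra.TensorProduct.map_id, AlgHom.id_apply]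

theorem counitMiddle_assoc_tmul (t : H ⊗[k] H) (v : V) :
    Q.counitMiddle V (Algebra.TensorProduct.assoc k k k H H V (t ⊗ₜ[k] v))
      = Algebra.TensorProduct.rid k k H
          (Algebra.TensorProduct.map (AlgHom.id k H) Q.counit t) ⊗ₜ[k] v := by
  induction t with
  | zero => simp
  | add s t hs ht => simp only [add_tmul, map_add, hs, ht]
  | tmul g h => simp [smul_tmul]

theorem counitMiddle_assoc_map_comul (t : H ⊗[k] V) :
    Q.counitMiddle V (Algebra.TensorProduct.assoc k k k H H V
      (Algebra.TensorProduct.map Q.comul (AlgHom.id k V) t)) = t := by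
  induction t with
  | zero => simp
  | add s t hs ht => simp only [map_add, hs, ht]
  | tmul h v => simp [counitMiddle_assoc_tmul, Q.counit_comul_right]

theorem counitMiddle_Phi : Q.counitMiddle H Q.Phi = 1 := by
  have := congrArg (Algebra.TensorProduct.map (AlgHom.id k H)
    (Algebra.TensorProduct.lid k H).toAlgHom) Q.counit_Phi
  rwa [← AlgHom.comp_apply, ← Algebra.TensorProduct.map_id_comp, map_one] at this

theorem isUnit_Phi : IsUnit Q.Phi := ⟨⟨Q.Phi, Q.PhiInv, Q.Phi_mul_inv, Q.inv_mul_Phi⟩, rfl⟩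

theorem counitLeft_Phi : Q.counitLeft (H ⊗[k] H) Q.Phi = 1 := by
  have pentagon_counit : (1 : H) ⊗ₜ[k] Q.counitLeft (H ⊗[k] H) Q.Phi * Q.Phi = Q.Phi := by
    have := congrArg (Q.counitMiddle (H ⊗[k] H)) Q.pentagon
    simpa only [map_mul, counitMiddle_tmul, counitMiddle_map_assoc_comp_map_comul,
      counitMiddle_map_map, counitMiddle_assoc_map_comul, counitMiddle_Phi, map_one, mul_one,
      one_mul] using this
  have one_tmul_eq_one : (1 : H) ⊗ₜ[k] Q.counitLeft (H ⊗[k] H) Q.Phi = 1 :=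
    Q.isUnit_Phi.mul_eq_right.mp pentagon_counit
  simpa using congrArg (Q.counitLeft (H ⊗[k] H)) one_tmul_eq_one

theorem map_PhiInv_eq_one {f : H ⊗[k] (H ⊗[k] H) →ₐ[k] V} (hf : f Q.Phi = 1) :
    f Q.PhiInv = 1 := by
  simpa [hf] using congrArg f Q.Phi_mul_inv

theorem counitLeft_PhiInv_mul (t : H ⊗[k] H) :
    Q.counitLeft (H ⊗[k] H) (Q.PhiInv * (1 : H) ⊗ₜ[k] t) = t := by
  simp [Q.map_PhiInv_eq_one Q.counitLeft_Phi]

theorem counitMiddle_PhiInv_mul_comul (h : H) :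
    Q.counitMiddle H (Q.PhiInv * (1 : H) ⊗ₜ[k] Q.comul h) = (1 : H) ⊗ₜ[k] h := by
  simp [Q.map_PhiInv_eq_one Q.counitMiddle_Phi, counitLeft_comul]

end QuasiBialgebra

section SmashProduct

variable {k H A : Type*} [Field k] [Ring H] [Algebra k H] [AddCommGroup A] [Module k A]
  {Q : QuasiBialgebra k H} {M : LeftModuleAlgebra Q A}

namespace LeftModuleAlgebra

variable (M) in
/-- The map `x ⊗ y ⊗ z ↦ (x·a)(y·a') # zh`. Its value at `x¹ ⊗ x²g₁ ⊗ x³g₂` is the product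
`(a # g)(a' # h)` in the smash product. -/
noncomputable def smashEval (a a' : A) (h : H) : H ⊗[k] (H ⊗[k] H) →ₗ[k] A ⊗[k] H :=
  TensorProduct.map (TensorProduct.lift (M.mul.compl₁₂ (M.act.flip a) (M.act.flip a')))
      (LinearMap.mulRight k h)
    ∘ₗ (TensorProduct.assoc k H H H).symm.toLinearMap

@[simp]
theorem smashEval_tmul (a a' : A) (h x y z : H) :
    M.smashEval a a' h (x ⊗ₜ[k] (y ⊗ₜ[k] z)) = M.mul (M.act x a) (M.act y a') ⊗ₜ[k] (z * h) := by
  simp [smashEval]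

theorem smashEval_one_left (a : A) (h : H) :
    M.smashEval M.one a h = TensorProduct.map (M.act.flip a) (LinearMap.mulRight k h)
      ∘ₗ (Q.counitLeft (H ⊗[k] H)).toLinearMap := by
  ext x y z
  simp [M.act_unit, M.one_mul, smul_tmul']

theorem smashEval_one_right (a : A) (h : H) :
    M.smashEval a M.one h = TensorProduct.map (M.act.flip a) (LinearMap.mulRight k h)
      ∘ₗ (Q.counitMiddle H).toLinearMap := by
  ext x y z
  simp [M.act_unit, M.mul_one, smul_tmul']

theorem map_flip_act_one (V : Type*) [Ring V] [Algebra k V] :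
    TensorProduct.map (M.act.flip M.one) (LinearMap.id (M := V))
      = TensorProduct.mk k A V M.one ∘ₗ (Q.counitLeft V).toLinearMap := by
  ext h v
  simp [M.act_unit, smul_tmul]

end LeftModuleAlgebra

namespace IsSmashMul

variable {mulB : A ⊗[k] H →ₗ[k] A ⊗[k] H →ₗ[k] A ⊗[k] H}

theorem tmul_mul_tmul (hmulB : IsSmashMul Q M mulB) (a a' : A) (h h' : H) :
    mulB (a ⊗ₜ[k] h) (a' ⊗ₜ[k] h')
      = M.smashEval a a' h' (Q.PhiInv * (1 : H) ⊗ₜ[k] Q.comul h) := by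
  obtain ⟨n, x, y, z, hPhiInv⟩ := exists_sum_tmul_tmul_eq Q.PhiInv
  obtain ⟨m, d, e, hcomul⟩ := TensorProduct.exists_sum_tmul_eq (Q.comul h)
  rw [hmulB a a' h h' n x y z hPhiInv m d e hcomul, hPhiInv, hcomul]
  simp [tmul_sum, Finset.sum_mul_sum]

theorem one_tmul_mul_tmul (hmulB : IsSmashMul Q M mulB) (g : H) (a : A) (h : H) :
    mulB (M.one ⊗ₜ[k] g) (a ⊗ₜ[k] h)
      = TensorProduct.map (M.act.flip a) (LinearMap.mulRight k h) (Q.comul g) := by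
  rw [hmulB.tmul_mul_tmul, LeftModuleAlgebra.smashEval_one_left, LinearMap.comp_apply,
    AlgHom.toLinearMap_apply, Q.counitLeft_PhiInv_mul]

theorem tmul_mul_one_tmul (hmulB : IsSmashMul Q M mulB) (a : A) (g h : H) :
    mulB (a ⊗ₜ[k] g) (M.one ⊗ₜ[k] h) = a ⊗ₜ[k] (g * h) := by
  rw [hmulB.tmul_mul_tmul, LeftModuleAlgebra.smashEval_one_right, LinearMap.comp_apply,
    AlgHom.toLinearMap_apply, Q.counitMiddle_PhiInv_mul_comul]
  simp [M.act_one]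

theorem one_mul (hmulB : IsSmashMul Q M mulB) (b : A ⊗[k] H) : mulB (M.one ⊗ₜ[k] 1) b = b := by
  suffices mulB (M.one ⊗ₜ[k] 1) = LinearMap.id from LinearMap.congr_fun this b
  ext a h
  simp [hmulB.one_tmul_mul_tmul, Algebra.TensorProduct.one_def, M.act_one]

theorem mul_one (hmulB : IsSmashMul Q M mulB) (b : A ⊗[k] H) : mulB b (M.one ⊗ₜ[k] 1) = b := by
  suffices mulB.flip (M.one ⊗ₜ[k] 1) = LinearMap.id from LinearMap.congr_fun this b
  ext a h
  simp [hmulB.tmul_mul_one_tmul]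

end IsSmashMul

namespace IsSmashCoact

variable {coactB : A ⊗[k] H →ₗ[k] (A ⊗[k] H) ⊗[k] H}

theorem apply_tmul (hcoactB : IsSmashCoact Q M coactB) (a : A) (h : H) :
    coactB (a ⊗ₜ[k] h) = (TensorProduct.assoc k A H H).symm
      (TensorProduct.map (M.act.flip a) LinearMap.id (Q.PhiInv * (1 : H) ⊗ₜ[k] Q.comul h)) := by
  obtain ⟨n, x, y, z, hPhiInv⟩ := exists_sum_tmul_tmul_eq Q.PhiInv
  obtain ⟨m, d, e, hcomul⟩ := TensorProduct.exists_sum_tmul_eq (Q.comul h)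
  rw [hcoactB a h n x y z hPhiInv m d e hcomul, hPhiInv, hcomul]
  simp [tmul_sum, Finset.sum_mul_sum]

theorem apply_one_tmul (hcoactB : IsSmashCoact Q M coactB) (h : H) :
    coactB (M.one ⊗ₜ[k] h) = (TensorProduct.assoc k A H H).symm (M.one ⊗ₜ[k] Q.comul h) := by
  rw [hcoactB.apply_tmul, LeftModuleAlgebra.map_flip_act_one, LinearMap.comp_apply,
    AlgHom.toLinearMap_apply, Q.counitLeft_PhiInv_mul, TensorProduct.mk_apply]

end IsSmashCoact

end SmashProduct

/-- The canonical map `j : H → A # H`, `j(h) = 1_A # h`, is a morphism of right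
`H`-comodule algebras: it is multiplicative, unital, and compatible with the coactions
(the compatibility `Φ_ρ = (j ⊗ id ⊗ id)(Φ)` holds by definition of the structure of
`A # H`). -/
theorem statement16 {k H A : Type*} [Field k] [Ring H] [Algebra k H]
    [AddCommGroup A] [Module k A] (Q : QuasiBialgebra k H)
    (M : LeftModuleAlgebra Q A)
    (mulB : (A ⊗[k] H) →ₗ[k] (A ⊗[k] H) →ₗ[k] (A ⊗[k] H))
    (hmulB : IsSmashMul Q M mulB)
    (coactB : (A ⊗[k] H) →ₗ[k] (A ⊗[k] H) ⊗[k] H)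
    (hcoactB : IsSmashCoact Q M coactB) :
    -- `j` is multiplicative:
    (∀ g h : H, mulB (M.one ⊗ₜ[k] g) (M.one ⊗ₜ[k] h) = M.one ⊗ₜ[k] (g * h))
    -- `j(1) = 1_A # 1` is the unit of `A # H`:
    ∧ (∀ b : A ⊗[k] H,
        mulB (M.one ⊗ₜ[k] (1 : H)) b = b ∧ mulB b (M.one ⊗ₜ[k] (1 : H)) = b)
    -- `j` intertwines the coactions: `ρ(j(h)) = (j ⊗ id)(Δ(h))`:
    ∧ (∀ (h : H) (m : ℕ) (d1 d2 : Fin m → H),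
        Q.comul h = ∑ j, d1 j ⊗ₜ[k] d2 j →
        coactB (M.one ⊗ₜ[k] h) = ∑ j, (M.one ⊗ₜ[k] d1 j) ⊗ₜ[k] d2 j) := by
  refine ⟨hmulB.tmul_mul_one_tmul M.one, fun b => ⟨hmulB.one_mul b, hmulB.mul_one b⟩, ?_⟩
  intro h m d1 d2 hcomul
  simp [hcoactB.apply_one_tmul, hcomul, tmul_sum]
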